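/- There exists an absolute constant C > 0 such that for every θ ∈ (0,1) and every positive integer n, ∫_{A} G(s,t,u,v) ds dt du dv ≤ C · n^{2-θ} θ^{-2} (1-θ)^{-2}, and there exists an absolute constant c > 0 such that this integral is ≥ c · n^{2-θ} θ^{-2} (1-θ)^{-2} whenever additionally n^{1-θ} ≥ 8; here A = { (s,t,u,v) ∈ (0,∞)⁴ : 0 < u < 1, 1 ≤ v < n^{1/2}, s ≥ n^{1/4} u^{1/2}, t ≥ n^{1/4} v^{-1/2} }. -/

import Mathlib

open MeasureTheory Set Real

/-- The integrand `G(s,t,u,v)` from the paper's computation of the completely 1-summing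
norm of the identity `OH_n → ℓ^n_p`, with `θ = 2/p'`. Here `p = (s, t, u, v)`. -/
noncomputable def G (θ : ℝ) (n : ℕ) (p : ℝ × ℝ × ℝ × ℝ) : ℝ :=
  (n : ℝ) ^ (2 : ℕ) * p.1 ^ (-1 - 2 * θ) * p.2.1 ^ (-1 - 2 * θ) *
    min (min (min ((n : ℝ)⁻¹ * p.1 ^ (4 : ℝ) * p.2.2.1 ^ (-2 : ℝ) * p.2.2.2 ^ (-2 : ℝ))
                  ((n : ℝ)⁻¹ * p.2.1 ^ (4 : ℝ)))
             (min (p.1 ^ (4 : ℝ) * p.2.2.1 ^ (-2 : ℝ)) (p.2.1 ^ (4 : ℝ) * p.2.2.2 ^ (-2 : ℝ))))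
        (min (min (p.2.2.1 ^ (-2 : ℝ) * p.2.2.2 ^ (-2 : ℝ)) (p.2.2.1 ^ (-2 : ℝ)))
             (min 1 (p.2.2.2 ^ (-2 : ℝ))))

/-- The region of integration. -/
def A (n : ℕ) : Set (ℝ × ℝ × ℝ × ℝ) :=
  {p | 0 < p.1 ∧ 0 < p.2.1 ∧ 0 < p.2.2.1 ∧ 0 < p.2.2.2 ∧ p.2.2.1 < 1 ∧ 1 ≤ p.2.2.2 ∧ p.2.2.2 < (n : ℝ) ^ ((1:ℝ)/2) ∧ (n : ℝ) ^ ((1:ℝ)/4) * p.2.2.1 ^ ((1:ℝ)/2) ≤ p.1 ∧ (n : ℝ) ^ ((1:ℝ)/4) * p.2.2.2 ^ (-(1/2) : ℝ) ≤ p.2.1}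

lemma lint_Ici (a θ : ℝ) (ha : 0 < a) (hθ : 0 < θ) :
    ∫⁻ s in Ici a, ENNReal.ofReal (s ^ (-1 - 2 * θ)) =
      ENNReal.ofReal (a ^ (-2 * θ) / (2 * θ)) := by
  rw [setLIntegral_congr Ioi_ae_eq_Ici.symm,
    ← ofReal_integral_eq_lintegral_ofReal
      (integrableOn_Ioi_rpow_of_lt (by linarith) ha)
      ((ae_restrict_iff' measurableSet_Ioi).2 (ae_of_all _ fun x hx =>
        rpow_nonneg (ha.le.trans (le_of_lt hx)) _)),
    integral_Ioi_rpow_of_lt (by linarith) ha]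
  congr 1
  rw [show -1 - 2 * θ + 1 = -(2 * θ) by ring, neg_div_neg_eq, neg_mul]

lemma lint_u (θ : ℝ) (hθ1 : θ < 1) :
    ∫⁻ u in Ioo (0:ℝ) 1, ENNReal.ofReal (u ^ (-θ)) = ENNReal.ofReal (1 / (1 - θ)) := by
  have hi : IntervalIntegrable (fun u : ℝ => u ^ (-θ)) volume 0 1 :=
    intervalIntegral.intervalIntegrable_rpow' (by linarith)
  rw [setLIntegral_congr Ioo_ae_eq_Ioc,
    ← ofReal_integral_eq_lintegral_ofReal
      ((intervalIntegrable_iff_integrableOn_Ioc_of_le zero_le_one).1 hi)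
      ((ae_restrict_iff' measurableSet_Ioc).2 (ae_of_all _ fun x hx =>
        rpow_nonneg (le_of_lt hx.1) _)),
    ← intervalIntegral.integral_of_le zero_le_one, integral_rpow (Or.inl (by linarith))]
  congr 1
  rw [one_rpow, zero_rpow (by linarith), sub_zero, show -θ + 1 = 1 - θ by ring]

lemma lint_v (θ b : ℝ) (hθ1 : θ < 1) (hb : 1 ≤ b) :
    ∫⁻ v in Ico (1:ℝ) b, ENNReal.ofReal (v ^ (θ - 2)) =
      ENNReal.ofReal ((1 - b ^ (θ - 1)) / (1 - θ)) := by
  have h0 : (0:ℝ) ∉ uIcc 1 b := by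
    rw [uIcc_of_le hb]; intro h; linarith [h.1]
  have hi : IntervalIntegrable (fun u : ℝ => u ^ (θ - 2)) volume 1 b :=
    intervalIntegral.intervalIntegrable_rpow (Or.inr h0)
  rw [setLIntegral_congr Ico_ae_eq_Ioc,
    ← ofReal_integral_eq_lintegral_ofReal
      ((intervalIntegrable_iff_integrableOn_Ioc_of_le hb).1 hi)
      ((ae_restrict_iff' measurableSet_Ioc).2 (ae_of_all _ fun x hx =>
        rpow_nonneg (zero_le_one.trans (le_of_lt hx.1)) _)),
    ← intervalIntegral.integral_of_le hb, integral_rpow (Or.inr ⟨by linarith, h0⟩)]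
  congr 1
  rw [one_rpow, show θ - 2 + 1 = -(1 - θ) by ring, show θ - 1 = -(1 - θ) by ring, div_neg,
    ← neg_div, neg_sub]

lemma G_eq_on (θ : ℝ) (n : ℕ) (hn : 0 < n) (p : ℝ × ℝ × ℝ × ℝ) (hp : p ∈ A n) :
    G θ n p = (n : ℝ) ^ (2 : ℕ) * p.1 ^ (-1 - 2 * θ) * p.2.1 ^ (-1 - 2 * θ) *
      p.2.2.2 ^ (-2 : ℝ) := by
  obtain ⟨s, t, u, v⟩ := p
  obtain ⟨hs, ht, hu, hv, hu1, hv1, hvn, hsu, htv⟩ := hp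
  simp only at *
  have hn1 : (1:ℝ) ≤ n := by exact_mod_cast hn
  have hn0 : (0:ℝ) < n := by linarith
  unfold G
  simp only
  congr 1
  have e4 : ∀ x : ℝ, x ^ (4:ℝ) = x ^ (4:ℕ) := fun x => by exact_mod_cast rpow_natCast x 4
  have hs4 : (n:ℝ) * u ^ 2 ≤ s ^ (4:ℝ) := by
    have := rpow_le_rpow (by positivity) hsu (show (0:ℝ) ≤ 4 by norm_num)
    rw [mul_rpow (by positivity) (by positivity), ← rpow_mul hn0.le, ← rpow_mul hu.le] at this
    norm_num at this
    simpa using this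
  have ht4 : (n:ℝ) * v ^ (-2:ℝ) ≤ t ^ (4:ℝ) := by
    have := rpow_le_rpow (by positivity) htv (show (0:ℝ) ≤ 4 by norm_num)
    rw [mul_rpow (by positivity) (by positivity), ← rpow_mul hn0.le, ← rpow_mul hv.le] at this
    norm_num at this
    simpa using this
  have hv2 : v ^ 2 ≤ n := by
    have := rpow_le_rpow hv.le hvn.le (show (0:ℝ) ≤ 2 by norm_num)
    rw [← rpow_mul hn0.le] at this
    norm_num at this
    simpa using this
  have hm : ∀ x : ℝ, 0 < x → x ^ (-2:ℝ) = (x ^ 2)⁻¹ := fun x hx => by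
    rw [rpow_neg hx.le]; norm_num
  rw [hm u hu, hm v hv] at *
  generalize s ^ (4:ℝ) = S at *
  generalize t ^ (4:ℝ) = T at *
  have hU : 0 < u ^ 2 := by positivity
  have hU1 : u ^ 2 ≤ 1 := by nlinarith
  have hV1 : 1 ≤ v ^ 2 := by nlinarith
  generalize u ^ 2 = U at *
  generalize v ^ 2 = V at *
  have hV : 0 < V := by linarith
  have hUi : 1 ≤ U⁻¹ := (one_le_inv₀ hU).2 hU1
  have hVi : V⁻¹ ≤ 1 := inv_le_one_of_one_le₀ hV1
  have hVp : 0 < V⁻¹ := by positivity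
  have hS' : (n:ℝ) ≤ S * U⁻¹ := by rw [← div_eq_mul_inv, le_div_iff₀ hU]; exact hs4
  have h1 : V⁻¹ ≤ (n:ℝ)⁻¹ * S * U⁻¹ * V⁻¹ := by
    have : 1 ≤ (n:ℝ)⁻¹ * (S * U⁻¹) := by
      rw [← div_eq_inv_mul, le_div_iff₀ hn0]; linarith
    nlinarith
  have h2 : V⁻¹ ≤ (n:ℝ)⁻¹ * T := by
    rw [← div_eq_inv_mul, le_div_iff₀ hn0]; linarith
  have h3 : V⁻¹ ≤ S * U⁻¹ := by linarith
  have h4 : V⁻¹ ≤ T * V⁻¹ := by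
    have : 1 ≤ (n:ℝ) * V⁻¹ := by
      rw [← div_eq_mul_inv, le_div_iff₀ hV]; linarith
    nlinarith
  have h5 : V⁻¹ ≤ U⁻¹ * V⁻¹ := by nlinarith
  have h6 : V⁻¹ ≤ U⁻¹ := by linarith
  apply le_antisymm
  · exact (min_le_right _ _).trans ((min_le_right _ _).trans (min_le_right _ _))
  · simp only [le_min_iff]
    exact ⟨⟨⟨h1, h2⟩, h3, h4⟩, ⟨h5, h6⟩, hVi, le_rfl⟩

lemma meas_A (n : ℕ) : MeasurableSet (A n) := by
  unfold A
  simp only [measurableSet_setOfPred]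
  repeat' apply Measurable.and
  all_goals apply measurableSet_setOfPred.1
  all_goals first
    | exact measurableSet_lt (by fun_prop) (by fun_prop)
    | exact measurableSet_le (by fun_prop) (by fun_prop)

lemma ind_mul (S : Set ℝ) (f : ℝ → ENNReal) (hS : MeasurableSet S) (hf : Measurable f)
    (c : ENNReal) : ∫⁻ x, c * S.indicator f x = c * ∫⁻ x in S, f x := by
  rw [lintegral_const_mul _ (hf.indicator hS), lintegral_indicator hS]

lemma lint_A (θ : ℝ) (hθ : 0 < θ) (hθ1 : θ < 1) (n : ℕ) (hn : 0 < n) :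
    ∫⁻ p in A n, ENNReal.ofReal (G θ n p) =
      ENNReal.ofReal ((n : ℝ) ^ (2 - θ) * θ ^ (-2 : ℝ) * (1 - θ) ^ (-2 : ℝ) *
        ((1 - ((n:ℝ) ^ ((1:ℝ)/2)) ^ (θ - 1)) / 4)) := by
  have hn1 : (1:ℝ) ≤ n := by exact_mod_cast hn
  have hn0 : (0:ℝ) < n := by linarith
  have hb : (1:ℝ) ≤ (n : ℝ) ^ ((1:ℝ)/2) := one_le_rpow hn1 (by norm_num)
  have h1θ : 0 < 1 - θ := by linarith
  set N := (n:ℝ) ^ ((1:ℝ)/4) with hN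
  set b := (n:ℝ) ^ ((1:ℝ)/2) with hbdef
  have hNp : 0 < N := by positivity
  have hbp : b ^ (θ - 1) ≤ 1 := rpow_le_one_of_one_le_of_nonpos hb (by linarith)
  set f : ℝ → ENNReal := fun s => ENNReal.ofReal (s ^ (-1 - 2 * θ)) with hf
  have hfm : Measurable f := by fun_prop
  set g : ℝ → ENNReal := fun v => ENNReal.ofReal ((n:ℝ) ^ (2:ℕ) * v ^ (-2:ℝ)) with hg
  have hgm : Measurable g := by fun_prop
  have key : ∀ s t u v : ℝ, (A n).indicator (fun p => ENNReal.ofReal (G θ n p)) (s, t, u, v) =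
      (Ico 1 b).indicator g v * (Ioo (0:ℝ) 1).indicator 1 u *
      (Ici (N * v ^ (-(1/2) : ℝ))).indicator f t * (Ici (N * u ^ ((1:ℝ)/2))).indicator f s := by
    intro s t u v
    by_cases hp : (s, t, u, v) ∈ A n
    · rw [indicator_of_mem hp, G_eq_on θ n hn _ hp]
      obtain ⟨hs, ht, hu, hv, hu1, hv1, hvn, hsu, htv⟩ := hp
      simp only at *
      rw [indicator_of_mem (show v ∈ Ico 1 b from ⟨hv1, hvn⟩),
        indicator_of_mem (show u ∈ Ioo (0:ℝ) 1 from ⟨hu, hu1⟩),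
        indicator_of_mem (show t ∈ Ici (N * v ^ (-(1/2) : ℝ)) from htv),
        indicator_of_mem (show s ∈ Ici (N * u ^ ((1:ℝ)/2)) from hsu)]
      simp only [hf, hg, Pi.one_apply, mul_one]
      rw [← ENNReal.ofReal_mul (by positivity), ← ENNReal.ofReal_mul (by positivity)]
      congr 1
      ring
    · rw [indicator_of_notMem hp]
      by_contra hne
      have hne := Ne.symm hne
      simp only [ne_eq, mul_eq_zero, not_or] at hne
      obtain ⟨⟨⟨hv, hu⟩, ht⟩, hs⟩ := hne
      have hv := mem_of_indicator_ne_zero hv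
      have hu := mem_of_indicator_ne_zero hu
      have ht := mem_of_indicator_ne_zero ht
      have hs := mem_of_indicator_ne_zero hs
      have hv0 : 0 < v := by linarith [hv.1]
      have hu0 : 0 < u := hu.1
      have ht0 : 0 < t := lt_of_lt_of_le (by positivity) ht
      have hs0 : 0 < s := lt_of_lt_of_le (by positivity) hs
      exact hp ⟨hs0, ht0, hu0, hv0, hu.2, hv.1, hv.2, hs, ht⟩
  have hGm : Measurable (fun p => ENNReal.ofReal (G θ n p)) := by
    unfold G; fun_prop
  have hFm := hGm.indicator (meas_A n)
  rw [← lintegral_indicator (meas_A n)]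
  rw [Measure.volume_eq_prod, lintegral_prod_symm' _ hFm]
  rw [Measure.volume_eq_prod, lintegral_prod_symm' _ hFm.lintegral_prod_left']
  rw [Measure.volume_eq_prod, lintegral_prod_symm' _ hFm.lintegral_prod_left'.lintegral_prod_left']
  simp only [key]
  have step : ∀ v u : ℝ, (∫⁻ t, ∫⁻ s, (Ico 1 b).indicator g v * (Ioo (0:ℝ) 1).indicator 1 u *
      (Ici (N * v ^ (-(1/2) : ℝ))).indicator f t * (Ici (N * u ^ ((1:ℝ)/2))).indicator f s) =
      (Ico 1 b).indicator (fun v => ENNReal.ofReal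
        ((n:ℝ) ^ (2 - θ) / (4 * θ ^ 2) * v ^ (θ - 2))) v *
      (Ioo (0:ℝ) 1).indicator (fun u => ENNReal.ofReal (u ^ (-θ))) u := by
    intro v u
    simp_rw [ind_mul _ f measurableSet_Ici hfm]
    by_cases hv : v ∈ Ico 1 b
    swap
    · simp [indicator_of_notMem hv]
    by_cases hu : u ∈ Ioo (0:ℝ) 1
    swap
    · simp [indicator_of_notMem hu]
    have hv0 : 0 < v := by linarith [hv.1]
    have hu0 : 0 < u := hu.1
    rw [lintegral_mul_const _ ((hfm.indicator measurableSet_Ici).const_mul _),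
      ind_mul _ f measurableSet_Ici hfm, lint_Ici _ θ (by positivity) hθ,
      lint_Ici _ θ (by positivity) hθ]
    simp only [indicator_of_mem hv, indicator_of_mem hu, hg, Pi.one_apply, mul_one]
    rw [← ENNReal.ofReal_mul (by positivity), ← ENNReal.ofReal_mul (by positivity),
      ← ENNReal.ofReal_mul (by positivity)]
    congr 1
    rw [mul_rpow hNp.le (by positivity), mul_rpow hNp.le (by positivity), ← rpow_mul hv0.le,
      ← rpow_mul hu0.le, hN, ← rpow_mul hn0.le,
      show (2 - θ : ℝ) = (2:ℕ) + (1 / 4 * (-2 * θ) + 1 / 4 * (-2 * θ)) by push_cast; ring,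
      rpow_add hn0, rpow_add hn0, rpow_natCast, show θ - 2 = -2 + -(1/2) * (-2 * θ) by ring,
      rpow_add hv0, show 1 / 2 * (-2 * θ) = -θ by ring]
    field_simp
    ring
  simp only [step]
  have hm1 : Measurable (fun u : ℝ => ENNReal.ofReal (u ^ (-θ))) := by fun_prop
  have hm2 : Measurable (fun v : ℝ => ENNReal.ofReal
        ((n:ℝ) ^ (2 - θ) / (4 * θ ^ 2) * v ^ (θ - 2))) := by fun_prop
  simp_rw [ind_mul _ _ measurableSet_Ioo hm1]
  rw [lint_u θ hθ1, lintegral_mul_const _ (hm2.indicator measurableSet_Ico),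
    lintegral_indicator measurableSet_Ico]
  simp_rw [ENNReal.ofReal_mul (show 0 ≤ (n:ℝ) ^ (2 - θ) / (4 * θ ^ 2) by positivity)]
  rw [lintegral_const_mul _ (by fun_prop), lint_v θ b hθ1 hb,
    ← ENNReal.ofReal_mul (by positivity), ← ENNReal.ofReal_mul
      (mul_nonneg (by positivity) (div_nonneg (by linarith) h1θ.le))]
  congr 1
  rw [rpow_neg hθ.le, rpow_neg h1θ.le, rpow_two, rpow_two]
  field_simp

lemma int_A (θ : ℝ) (hθ : 0 < θ) (hθ1 : θ < 1) (n : ℕ) (hn : 0 < n) :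
    ∫ p in A n, G θ n p =
      (n : ℝ) ^ (2 - θ) * θ ^ (-2 : ℝ) * (1 - θ) ^ (-2 : ℝ) *
        ((1 - ((n:ℝ) ^ ((1:ℝ)/2)) ^ (θ - 1)) / 4) := by
  have hn1 : (1:ℝ) ≤ n := by exact_mod_cast hn
  have hb : (1:ℝ) ≤ (n : ℝ) ^ ((1:ℝ)/2) := one_le_rpow hn1 (by norm_num)
  have hbp := rpow_le_one_of_one_le_of_nonpos hb (show θ - 1 ≤ 0 by linarith)
  have h1θ : 0 < 1 - θ := by linarith
  have hGm : Measurable (G θ n) := by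
    unfold G; fun_prop
  rw [integral_eq_lintegral_of_nonneg_ae _ hGm.aestronglyMeasurable, lint_A θ hθ hθ1 n hn,
    ENNReal.toReal_ofReal]
  · exact mul_nonneg (by positivity) (by linarith)
  · refine (ae_restrict_iff' (meas_A n)).2 (ae_of_all _ fun p hp => ?_)
    rw [G_eq_on θ n hn p hp]
    obtain ⟨hs, ht, hu, hv, -⟩ := hp
    simp only [Pi.zero_apply]
    positivity

theorem stmt_13 :
    (∃ C : ℝ, 0 < C ∧ ∀ θ : ℝ, 0 < θ → θ < 1 → ∀ n : ℕ, 0 < n →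
      (∫ p in A n, G θ n p) ≤ C * ((n : ℝ) ^ (2 - θ) * θ ^ (-2 : ℝ) * (1 - θ) ^ (-2 : ℝ))) ∧
    (∃ c : ℝ, 0 < c ∧ ∀ θ : ℝ, 0 < θ → θ < 1 → ∀ n : ℕ, 0 < n →
      (8 : ℝ) ≤ (n : ℝ) ^ (1 - θ) →
      c * ((n : ℝ) ^ (2 - θ) * θ ^ (-2 : ℝ) * (1 - θ) ^ (-2 : ℝ)) ≤ ∫ p in A n, G θ n p) := by
  refine ⟨⟨1 / 4, by norm_num, fun θ hθ hθ1 n hn => ?_⟩, ⟨1 / 8, by norm_num,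
    fun θ hθ hθ1 n hn h8 => ?_⟩⟩
  · have h1θ : 0 < 1 - θ := by linarith
    rw [int_A θ hθ hθ1 n hn, mul_comm]
    refine mul_le_mul_of_nonneg_right ?_ (by positivity)
    have : 0 ≤ ((n:ℝ) ^ ((1:ℝ)/2)) ^ (θ - 1) := by positivity
    linarith
  · have h1θ : 0 < 1 - θ := by linarith
    have hn0 : (0:ℝ) < n := by exact_mod_cast hn
    rw [int_A θ hθ hθ1 n hn, mul_comm]
    refine mul_le_mul_of_nonneg_left ?_ (by positivity)
    have e : ((n:ℝ) ^ ((1:ℝ)/2)) ^ (θ - 1) = (((n:ℝ) ^ (1 - θ)) ^ ((1:ℝ)/2))⁻¹ := by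
      rw [← rpow_mul hn0.le, ← rpow_mul hn0.le, ← rpow_neg hn0.le]
      congr 1
      ring
    have h2 : (2:ℝ) ≤ ((n:ℝ) ^ (1 - θ)) ^ ((1:ℝ)/2) := by
      rw [← sqrt_eq_rpow]
      exact le_sqrt_of_sq_le (by linarith)
    have h3 := inv_anti₀ (by norm_num) h2
    rw [e]
    linarith
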